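/- Let W be a standard Brownian motion. For γ₀ > −1/2, define U₂ = (1+γ₀)∫₀¹ s^{2γ₀} (s^{−γ₀−1}W(s) − W(1)) ds. Then E[U₂] = 0 and Var(U₂) = ((1+γ₀)/(1+2γ₀))². -/

import Mathlib

/-! `U₂` is `1 + γ₀` times the integral over `s ∈ (0,1]` of the random field
`f s = s ^ (2γ₀) * (s ^ (-γ₀-1) * W s - W 1)`. The field is centered and its `L²(μ)` norm is at most
`2 s ^ (γ₀ - 1/2)`, which is integrable on `(0,1]` exactly because `γ₀ > -1/2`. This bound justifies
Fubini both for the mean (`integral_integral_of_sq_le`) and for the second moment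
(`integral_sq_integral_of_sq_le`), so the mean is `0` and the variance is the double integral of
the covariance kernel
`s ^ (γ-1) t ^ (γ-1) min s t - s ^ γ t ^ (2γ) - s ^ (2γ) t ^ γ + s ^ (2γ) t ^ (2γ)`.

The first term of the kernel is integrated by splitting the square along the diagonal
(`integral_rpow_mul_min`): integrating first in the smaller variable only meets the power `s ^ γ`,
which avoids the logarithm that the other order would produce at `γ = 0`. Its value
`2 / ((1+γ)(1+2γ))` cancels with the two cross terms, which leaves `1 / (1+2γ)²`. -/

open MeasureTheory ProbabilityTheory

/-- A standard Brownian motion on `[0,∞)`: continuous paths started at `0`, measurable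
marginals, Gaussian increments with variance `t - s`, independent of the past. -/
def IsStdBrownian {Ω : Type*} [MeasurableSpace Ω] (μ : Measure Ω) (W : ℝ → Ω → ℝ) : Prop :=
  IsProbabilityMeasure μ ∧
  (∀ ω, W 0 ω = 0) ∧
  (∀ ω, Continuous fun s => W s ω) ∧
  (∀ s, Measurable (W s)) ∧
  (∀ s t : ℝ, 0 ≤ s → s ≤ t →
    Measure.map (fun ω => W t ω - W s ω) μ = gaussianReal 0 (Real.toNNReal (t - s))) ∧
  (∀ s t : ℝ, 0 ≤ s → s ≤ t → IndepFun (W s) (fun ω => W t ω - W s ω) μ)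

/-- `U₁ = (1/γ)∫₀¹ (s^γ - (1+γ)s^{2γ})(s^{-γ-1}W(s) - W(1)) ds`. -/
noncomputable def Ustat1 {Ω : Type*} (W : ℝ → Ω → ℝ) (γ : ℝ) (ω : Ω) : ℝ :=
  (1/γ) * ∫ s in Set.Ioc (0:ℝ) 1,
    (s ^ γ - (1+γ) * s ^ (2*γ)) * (s ^ (-γ-1) * W s ω - W 1 ω)

/-- `U₂ = (1+γ)∫₀¹ s^{2γ}(s^{-γ-1}W(s) - W(1)) ds`. -/
noncomputable def Ustat2 {Ω : Type*} (W : ℝ → Ω → ℝ) (γ : ℝ) (ω : Ω) : ℝ :=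
  (1+γ) * ∫ s in Set.Ioc (0:ℝ) 1, s ^ (2*γ) * (s ^ (-γ-1) * W s ω - W 1 ω)

/-! ### Moments of integrated random fields -/

section Fubini

variable {α Ω : Type*} [MeasurableSpace α] [MeasurableSpace Ω]

theorem integrable_prod_of_integral_norm_le {ν : Measure α} {μ : Measure Ω} [SFinite ν] [SFinite μ]
    {f : α × Ω → ℝ} (hf : Measurable f) {g : α → ℝ} (hg : Integrable g ν)
    (h : ∀ᵐ s ∂ν, Integrable (fun ω => f (s, ω)) μ ∧ ∫ ω, ‖f (s, ω)‖ ∂μ ≤ g s) :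
    Integrable f (ν.prod μ) := by
  rw [integrable_prod_iff hf.aestronglyMeasurable]
  refine ⟨h.mono fun s hs => hs.1, hg.mono' ?_ ?_⟩
  · exact hf.aestronglyMeasurable.norm.integral_prod_right'
  · filter_upwards [h] with s hs
    rw [Real.norm_of_nonneg (integral_nonneg fun _ => norm_nonneg _)]
    exact hs.2

/-- Cauchy–Schwarz for expectations, with the `L²` norms replaced by positive upper bounds. -/
theorem integral_norm_mul_le_of_sq_le {μ : Measure Ω} {X Y : Ω → ℝ} (hX : MemLp X 2 μ)
    (hY : MemLp Y 2 μ) {a b : ℝ} (ha : 0 < a) (hb : 0 < b) (hXa : ∫ ω, X ω ^ 2 ∂μ ≤ a ^ 2)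
    (hYb : ∫ ω, Y ω ^ 2 ∂μ ≤ b ^ 2) :
    ∫ ω, ‖X ω * Y ω‖ ∂μ ≤ a * b := by
  -- Young's inequality with weights chosen so that both terms are bounded by `a * b / 2`.
  have hpt : ∀ ω, ‖X ω * Y ω‖ ≤ b / (2 * a) * X ω ^ 2 + a / (2 * b) * Y ω ^ 2 := by
    intro ω
    rw [norm_mul, Real.norm_eq_abs, Real.norm_eq_abs, ← sq_abs (X ω), ← sq_abs (Y ω)]
    have h := sq_nonneg (b * |X ω| - a * |Y ω|)
    have : b / (2 * a) * |X ω| ^ 2 + a / (2 * b) * |Y ω| ^ 2 - |X ω| * |Y ω|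
        = (b * |X ω| - a * |Y ω|) ^ 2 / (2 * a * b) := by
      field_simp
      ring
    have h2 : 0 ≤ (b * |X ω| - a * |Y ω|) ^ 2 / (2 * a * b) := by positivity
    linarith
  have hX2 := hX.integrable_sq.const_mul (b / (2 * a))
  have hY2 := hY.integrable_sq.const_mul (a / (2 * b))
  calc ∫ ω, ‖X ω * Y ω‖ ∂μ
      ≤ ∫ ω, (b / (2 * a) * X ω ^ 2 + a / (2 * b) * Y ω ^ 2) ∂μ :=
        integral_mono (hX.integrable_mul hY).norm (hX2.add hY2) hpt
    _ = b / (2 * a) * ∫ ω, X ω ^ 2 ∂μ + a / (2 * b) * ∫ ω, Y ω ^ 2 ∂μ := by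
        rw [integral_add hX2 hY2, integral_const_mul, integral_const_mul]
    _ ≤ b / (2 * a) * a ^ 2 + a / (2 * b) * b ^ 2 := by gcongr
    _ = a * b := by field_simp; ring

variable {ν : Measure α} {μ : Measure Ω} [SFinite ν] [IsProbabilityMeasure μ]
  {f : α → Ω → ℝ} {p : α → ℝ}

/-- The mean of an integrated random field is the integral of the means, as soon as the `L²` norms
of the field are dominated by an integrable function. -/
theorem integral_integral_of_sq_le (hf : Measurable (Function.uncurry f)) (hp : Integrable p ν)
    (h : ∀ᵐ s ∂ν, 0 < p s ∧ MemLp (f s) 2 μ ∧ ∫ ω, f s ω ^ 2 ∂μ ≤ p s ^ 2) :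
    ∫ ω, (∫ s, f s ω ∂ν) ∂μ = ∫ s, (∫ ω, f s ω ∂μ) ∂ν := by
  refine (integral_integral_swap (integrable_prod_of_integral_norm_le hf hp ?_)).symm
  filter_upwards [h] with s ⟨hs, hL, hb⟩
  refine ⟨hL.integrable (by norm_num), ?_⟩
  have := integral_norm_mul_le_of_sq_le (μ := μ) hL (memLp_const (1 : ℝ)) hs one_pos hb (by simp)
  simpa using this

/-- The second moment of an integrated random field is the double integral of its covariance
kernel, as soon as the `L²` norms of the field are dominated by an integrable function. -/
theorem integral_sq_integral_of_sq_le (hf : Measurable (Function.uncurry f)) (hp : Integrable p ν)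
    (h : ∀ᵐ s ∂ν, 0 < p s ∧ MemLp (f s) 2 μ ∧ ∫ ω, f s ω ^ 2 ∂μ ≤ p s ^ 2) :
    ∫ ω, (∫ s, f s ω ∂ν) ^ 2 ∂μ = ∫ z, (∫ ω, f z.1 ω * f z.2 ω ∂μ) ∂(ν.prod ν) := by
  have hsq : ∀ ω, (∫ s, f s ω ∂ν) ^ 2 = ∫ z, f z.1 ω * f z.2 ω ∂(ν.prod ν) := fun ω => by
    rw [integral_prod_mul (fun s => f s ω) (fun s => f s ω), sq]
  simp_rw [hsq]
  refine (integral_integral_swap (μ := ν.prod ν) (ν := μ) (f := fun z ω => f z.1 ω * f z.2 ω)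
    (integrable_prod_of_integral_norm_le (g := fun z => p z.1 * p z.2) ?_ (hp.mul_prod hp) ?_)).symm
  · exact (hf.comp (measurable_fst.fst.prodMk measurable_snd)).mul
      (hf.comp (measurable_fst.snd.prodMk measurable_snd))
  · filter_upwards [Measure.quasiMeasurePreserving_fst.ae h,
      Measure.quasiMeasurePreserving_snd.ae h] with z ⟨h1, hL1, hb1⟩ ⟨h2, hL2, hb2⟩
    exact ⟨hL1.integrable_mul hL2, integral_norm_mul_le_of_sq_le hL1 hL2 h1 h2 hb1 hb2⟩

end Fubini

/-! ### The double integral of the covariance kernel -/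

section Kernel

theorem integrableOn_rpow_Ioc {r : ℝ} (hr : -1 < r) (t : ℝ) (ht : 0 ≤ t) :
    IntegrableOn (fun s : ℝ => s ^ r) (Set.Ioc 0 t) :=
  (intervalIntegrable_iff_integrableOn_Ioc_of_le ht).1
    (intervalIntegral.intervalIntegrable_rpow' hr)

theorem integral_rpow_Ioc {r : ℝ} (hr : -1 < r) (t : ℝ) (ht : 0 ≤ t) :
    ∫ s in Set.Ioc 0 t, s ^ r = t ^ (r + 1) / (r + 1) := by
  rw [← intervalIntegral.integral_of_le ht, integral_rpow (Or.inl hr),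
    Real.zero_rpow (by linarith), sub_zero]

/-- Lebesgue measure on `(0,1]`. -/
local notation "ν₀" => (volume.restrict (Set.Ioc (0 : ℝ) 1) : Measure ℝ)

theorem ae_prod_mem_Ioc :
    ∀ᵐ z ∂(Measure.prod ν₀ ν₀), z.1 ∈ Set.Ioc (0 : ℝ) 1 ∧ z.2 ∈ Set.Ioc (0 : ℝ) 1 := by
  have h : ∀ᵐ s ∂ν₀, s ∈ Set.Ioc (0 : ℝ) 1 := ae_restrict_mem measurableSet_Ioc
  filter_upwards [Measure.quasiMeasurePreserving_fst.ae h,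
    Measure.quasiMeasurePreserving_snd.ae h] with z h1 h2 using ⟨h1, h2⟩

theorem rpow_mul_min_le {γ s t : ℝ} (hs : 0 < s) (ht : 0 < t) :
    s ^ (γ - 1) * t ^ (γ - 1) * min s t ≤ s ^ (γ - 1 / 2) * t ^ (γ - 1 / 2) := by
  have hmin : min s t ≤ s ^ (1 / 2 : ℝ) * t ^ (1 / 2 : ℝ) := by
    rw [← Real.mul_rpow hs.le ht.le, ← Real.sqrt_eq_rpow]
    apply Real.le_sqrt_of_sq_le
    rw [sq]
    exact mul_le_mul (min_le_left _ _) (min_le_right _ _) (lt_min hs ht).le hs.le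
  have e : ∀ u : ℝ, 0 < u → u ^ (γ - 1 / 2) = u ^ (γ - 1) * u ^ (1 / 2 : ℝ) := fun u hu => by
    rw [← Real.rpow_add hu]; congr 1; ring
  rw [e s hs, e t ht]
  calc s ^ (γ - 1) * t ^ (γ - 1) * min s t
      ≤ s ^ (γ - 1) * t ^ (γ - 1) * (s ^ (1 / 2 : ℝ) * t ^ (1 / 2 : ℝ)) := by gcongr
    _ = _ := by ring

theorem integrable_rpow_mul_min {γ : ℝ} (hγ : -1 / 2 < γ) :
    Integrable (fun z : ℝ × ℝ => z.1 ^ (γ - 1) * z.2 ^ (γ - 1) * min z.1 z.2) (Measure.prod ν₀ ν₀) := by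
  have hp : Integrable (fun s : ℝ => s ^ (γ - 1 / 2)) ν₀ :=
    integrableOn_rpow_Ioc (by linarith) 1 zero_le_one
  refine (hp.mul_prod hp).mono' (Measurable.aestronglyMeasurable (by fun_prop)) ?_
  filter_upwards [ae_prod_mem_Ioc] with z ⟨h1, h2⟩
  have := lt_min h1.1 h2.1
  have := h1.1
  have := h2.1
  rw [Real.norm_of_nonneg (by positivity)]
  exact rpow_mul_min_le h1.1 h2.1

/-- The integral of the Brownian part of the kernel over one side of the diagonal. The
hypothesis `hS` says that `S` lies between `{s < t}` and `{s ≤ t}`; it is used at both extremes. -/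
theorem integral_indicator_rpow_mul_min {γ : ℝ} (hγ : -1 / 2 < γ) {S : Set (ℝ × ℝ)}
    (hSm : MeasurableSet S) (hS : ∀ s t, (s < t → (s, t) ∈ S) ∧ ((s, t) ∈ S → s ≤ t)) :
    ∫ z, S.indicator (fun z : ℝ × ℝ => z.1 ^ (γ - 1) * z.2 ^ (γ - 1) * min z.1 z.2) z
      ∂(Measure.prod ν₀ ν₀) = 1 / ((1 + γ) * (1 + 2 * γ)) := by
  rw [integral_prod_symm _ ((integrable_rpow_mul_min hγ).indicator hSm)]
  have hin : ∀ t ∈ Set.Ioc (0 : ℝ) 1,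
      ∫ s, S.indicator (fun z : ℝ × ℝ => z.1 ^ (γ - 1) * z.2 ^ (γ - 1) * min z.1 z.2) (s, t) ∂ν₀
        = t ^ (2 * γ) / (1 + γ) := by
    intro t ht
    have h1 : ∫ s, S.indicator
          (fun z : ℝ × ℝ => z.1 ^ (γ - 1) * z.2 ^ (γ - 1) * min z.1 z.2) (s, t) ∂ν₀
        = ∫ s in Set.Ioc 0 1, (Set.Ioc 0 t).indicator (fun s => t ^ (γ - 1) * s ^ γ) s := by
      apply integral_congr_ae
      filter_upwards [ae_restrict_mem measurableSet_Ioc,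
        ae_restrict_of_ae (Measure.ae_ne volume t)] with s hs hne
      rcases lt_or_gt_of_ne hne with hlt | hgt
      · rw [Set.indicator_of_mem ((hS s t).1 hlt),
          Set.indicator_of_mem (show s ∈ Set.Ioc 0 t from ⟨hs.1, hlt.le⟩)]
        simp only [min_eq_left hlt.le]
        rw [Real.rpow_sub_one hs.1.ne' γ]
        have := hs.1.ne'
        field_simp
      · rw [Set.indicator_of_notMem (fun h => absurd ((hS s t).2 h) (not_le.2 hgt)),
          Set.indicator_of_notMem (fun h => absurd h.2 (not_le.2 hgt))]
    rw [h1, setIntegral_indicator measurableSet_Ioc,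
      Set.inter_eq_right.2 (Set.Ioc_subset_Ioc_right ht.2), integral_const_mul,
      integral_rpow_Ioc (by linarith) t ht.1.le, ← mul_div_assoc, ← Real.rpow_add ht.1,
      add_comm γ 1]
    congr 2
    ring
  rw [setIntegral_congr_fun measurableSet_Ioc hin, integral_div,
    integral_rpow_Ioc (by linarith) 1 zero_le_one, Real.one_rpow]
  rw [div_div, mul_comm, add_comm (2 * γ) 1]

theorem integral_rpow_mul_min {γ : ℝ} (hγ : -1 / 2 < γ) :
    ∫ z : ℝ × ℝ, z.1 ^ (γ - 1) * z.2 ^ (γ - 1) * min z.1 z.2 ∂(Measure.prod ν₀ ν₀)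
      = 2 / ((1 + γ) * (1 + 2 * γ)) := by
  have hm1 : MeasurableSet {z : ℝ × ℝ | z.1 ≤ z.2} := measurableSet_le measurable_fst measurable_snd
  have hm2 : MeasurableSet {z : ℝ × ℝ | z.1 < z.2} := measurableSet_lt measurable_fst measurable_snd
  have hi := integrable_rpow_mul_min hγ
  rw [← integral_add_compl hm1 hi, ← integral_indicator hm1, ← integral_indicator hm1.compl,
    integral_indicator_rpow_mul_min hγ hm1 fun s t => ⟨fun h => le_of_lt h, fun h => h⟩]
  -- The part below the diagonal is the mirror image of the part above it.
  have hswap := integral_prod_swap (μ := ν₀) (ν := ν₀) ({z : ℝ × ℝ | z.1 ≤ z.2}ᶜ.indicator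
    (fun z : ℝ × ℝ => z.1 ^ (γ - 1) * z.2 ^ (γ - 1) * min z.1 z.2))
  have heq : (fun z : ℝ × ℝ => {z : ℝ × ℝ | z.1 ≤ z.2}ᶜ.indicator
      (fun z : ℝ × ℝ => z.1 ^ (γ - 1) * z.2 ^ (γ - 1) * min z.1 z.2) z.swap)
      = {z : ℝ × ℝ | z.1 < z.2}.indicator
        (fun z : ℝ × ℝ => z.1 ^ (γ - 1) * z.2 ^ (γ - 1) * min z.1 z.2) := by
    ext ⟨s, t⟩
    simp only [Set.indicator, Set.mem_compl_iff, Set.mem_ofPred_eq, Prod.swap, not_le]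
    rw [min_comm, mul_comm (t ^ (γ - 1))]
  rw [← hswap, heq,
    integral_indicator_rpow_mul_min hγ hm2 fun s t => ⟨fun h => h, fun h => le_of_lt h⟩]
  ring

theorem integral_kernel {γ : ℝ} (hγ : -1 / 2 < γ) :
    ∫ z : ℝ × ℝ, (z.1 ^ (γ - 1) * z.2 ^ (γ - 1) * min z.1 z.2 - z.1 ^ γ * z.2 ^ (2 * γ)
      - z.1 ^ (2 * γ) * z.2 ^ γ + z.1 ^ (2 * γ) * z.2 ^ (2 * γ)) ∂(Measure.prod ν₀ ν₀)
      = 1 / (1 + 2 * γ) ^ 2 := by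
  have i1 : Integrable (fun s : ℝ => s ^ γ) ν₀ := integrableOn_rpow_Ioc (by linarith) 1 zero_le_one
  have i2 : Integrable (fun s : ℝ => s ^ (2 * γ)) ν₀ :=
    integrableOn_rpow_Ioc (by linarith) 1 zero_le_one
  have i0 := integrable_rpow_mul_min hγ
  have v1 : ∫ s, s ^ γ ∂ν₀ = 1 / (γ + 1) := by
    rw [integral_rpow_Ioc (by linarith) 1 zero_le_one, Real.one_rpow]
  have v2 : ∫ s, s ^ (2 * γ) ∂ν₀ = 1 / (2 * γ + 1) := by
    rw [integral_rpow_Ioc (by linarith) 1 zero_le_one, Real.one_rpow]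
  rw [integral_add ((i0.sub' (i1.mul_prod i2)).sub' (i2.mul_prod i1)) (i2.mul_prod i2),
    integral_sub (i0.sub' (i1.mul_prod i2)) (i2.mul_prod i1), integral_sub i0 (i1.mul_prod i2),
    integral_rpow_mul_min hγ, integral_prod_mul (fun s : ℝ => s ^ γ) (fun s : ℝ => s ^ (2 * γ)),
    integral_prod_mul (fun s : ℝ => s ^ (2 * γ)) (fun s : ℝ => s ^ γ),
    integral_prod_mul (fun s : ℝ => s ^ (2 * γ)) (fun s : ℝ => s ^ (2 * γ)), v1, v2]
  have h1 : 1 + γ ≠ 0 := by linarith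
  have h2 : 1 + 2 * γ ≠ 0 := by linarith
  rw [add_comm γ 1, add_comm (2 * γ) 1]
  field_simp
  ring

end Kernel

/-! ### Covariances of Brownian motion and of the integrand -/

namespace IsStdBrownian

variable {Ω : Type*} [MeasurableSpace Ω] {μ : Measure Ω} {W : ℝ → Ω → ℝ}

theorem map_eq (hW : IsStdBrownian μ W) {t : ℝ} (ht : 0 ≤ t) :
    Measure.map (W t) μ = gaussianReal 0 (Real.toNNReal t) := by
  obtain ⟨-, h0, -, -, hinc, -⟩ := hW
  simpa [h0] using hinc 0 t le_rfl ht

theorem memLp (hW : IsStdBrownian μ W) {t : ℝ} (ht : 0 ≤ t) : MemLp (W t) 2 μ := by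
  have hm := hW.2.2.2.1 t
  have h := memLp_id_gaussianReal (μ := 0) (v := Real.toNNReal t) 2
  rw [← hW.map_eq ht, memLp_map_measure_iff aestronglyMeasurable_id hm.aemeasurable] at h
  exact h

theorem integral_eq_zero (hW : IsStdBrownian μ W) {t : ℝ} (ht : 0 ≤ t) : ∫ ω, W t ω ∂μ = 0 := by
  have h := integral_id_gaussianReal (μ := 0) (v := Real.toNNReal t)
  rwa [← hW.map_eq ht,
    integral_map (hW.2.2.2.1 t).aemeasurable measurable_id'.aestronglyMeasurable] at h

theorem integral_sq (hW : IsStdBrownian μ W) {t : ℝ} (ht : 0 ≤ t) :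
    ∫ ω, W t ω ^ 2 ∂μ = t := by
  have hm := hW.2.2.2.1 t
  rw [← variance_of_integral_eq_zero hm.aemeasurable (hW.integral_eq_zero ht)]
  have h := variance_id_gaussianReal (μ := 0) (v := Real.toNNReal t)
  rw [← hW.map_eq ht, variance_map aemeasurable_id hm.aemeasurable] at h
  simpa [ht] using h

theorem integral_mul_of_le (hW : IsStdBrownian μ W) {s t : ℝ} (hs : 0 ≤ s) (hst : s ≤ t) :
    ∫ ω, W s ω * W t ω ∂μ = s := by
  have hm := hW.2.2.2.1
  have hLs := hW.memLp hs
  have hLt := hW.memLp (hs.trans hst)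
  have hi := hW.1
  have hind : ∫ ω, W s ω * (W t ω - W s ω) ∂μ = 0 := by
    rw [(hW.2.2.2.2.2 s t hs hst).integral_fun_mul_eq_mul_integral (hm s).aestronglyMeasurable
      ((hm t).sub (hm s)).aestronglyMeasurable, hW.integral_eq_zero hs, zero_mul]
  have h := integral_add hLs.integrable_sq (hLs.integrable_mul (hLt.sub hLs))
  simp only [Pi.mul_apply, Pi.sub_apply] at h
  rw [hW.integral_sq hs, hind, add_zero] at h
  refine Eq.trans (integral_congr_ae (.of_forall fun ω => ?_)) h
  ring

theorem integral_mul (hW : IsStdBrownian μ W) {s t : ℝ} (hs : 0 ≤ s) (ht : 0 ≤ t) :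
    ∫ ω, W s ω * W t ω ∂μ = min s t := by
  rcases le_total s t with h | h
  · rw [hW.integral_mul_of_le hs h, min_eq_left h]
  · simp_rw [mul_comm (W s _)]
    rw [hW.integral_mul_of_le ht h, min_eq_right h]

/-- The covariance kernel of the integrand of `Ustat2`. -/
theorem integral_field_mul (hW : IsStdBrownian μ W) (γ : ℝ) {s t : ℝ} (hs : s ∈ Set.Ioc (0 : ℝ) 1)
    (ht : t ∈ Set.Ioc (0 : ℝ) 1) :
    ∫ ω, (s ^ (2 * γ) * (s ^ (-γ - 1) * W s ω - W 1 ω))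
        * (t ^ (2 * γ) * (t ^ (-γ - 1) * W t ω - W 1 ω)) ∂μ
      = s ^ (γ - 1) * t ^ (γ - 1) * min s t - s ^ γ * t ^ (2 * γ) - s ^ (2 * γ) * t ^ γ
        + s ^ (2 * γ) * t ^ (2 * γ) := by
  have e1 : ∀ u : ℝ, 0 < u → u ^ (2 * γ) * u ^ (-γ - 1) = u ^ (γ - 1) := fun u hu => by
    rw [← Real.rpow_add hu]; congr 1; ring
  have e2 : ∀ u : ℝ, 0 < u → u ^ (γ - 1) * u = u ^ γ := fun u hu => by
    rw [Real.rpow_sub_one hu.ne']; field_simp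
  have hLs := hW.memLp hs.1.le
  have hLt := hW.memLp ht.1.le
  have hL1 := hW.memLp zero_le_one
  have j1 := (hLs.integrable_mul hLt).const_mul (s ^ (γ - 1) * t ^ (γ - 1))
  have j2 := (hLs.integrable_mul hL1).const_mul (s ^ (γ - 1) * t ^ (2 * γ))
  have j3 := (hLt.integrable_mul hL1).const_mul (s ^ (2 * γ) * t ^ (γ - 1))
  have j4 := (hL1.integrable_mul hL1).const_mul (s ^ (2 * γ) * t ^ (2 * γ))
  have hexp : ∀ ω, (s ^ (2 * γ) * (s ^ (-γ - 1) * W s ω - W 1 ω))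
        * (t ^ (2 * γ) * (t ^ (-γ - 1) * W t ω - W 1 ω))
      = s ^ (γ - 1) * t ^ (γ - 1) * (W s * W t) ω - s ^ (γ - 1) * t ^ (2 * γ) * (W s * W 1) ω
        - s ^ (2 * γ) * t ^ (γ - 1) * (W t * W 1) ω
        + s ^ (2 * γ) * t ^ (2 * γ) * (W 1 * W 1) ω := fun ω => by
    rw [← e1 s hs.1, ← e1 t ht.1]
    simp only [Pi.mul_apply]
    ring
  simp_rw [hexp]
  rw [integral_add ((j1.sub' j2).sub' j3) j4, integral_sub (j1.sub' j2) j3, integral_sub j1 j2]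
  simp only [integral_const_mul, Pi.mul_apply]
  rw [hW.integral_mul hs.1.le ht.1.le, hW.integral_mul hs.1.le zero_le_one,
    hW.integral_mul ht.1.le zero_le_one, hW.integral_mul zero_le_one zero_le_one,
    min_eq_left hs.2, min_eq_left ht.2, min_self, ← e2 s hs.1, ← e2 t ht.1]
  ring

theorem memLp_field (hW : IsStdBrownian μ W) (γ : ℝ) {s : ℝ} (hs : 0 ≤ s) :
    MemLp (fun ω => s ^ (2 * γ) * (s ^ (-γ - 1) * W s ω - W 1 ω)) 2 μ :=
  (((hW.memLp hs).const_mul _).sub (hW.memLp zero_le_one)).const_mul _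

theorem integral_field_sq_le (hW : IsStdBrownian μ W) {γ : ℝ} (hγ : -1 / 2 < γ) {s : ℝ}
    (hs : s ∈ Set.Ioc (0 : ℝ) 1) :
    ∫ ω, (s ^ (2 * γ) * (s ^ (-γ - 1) * W s ω - W 1 ω)) ^ 2 ∂μ ≤ (2 * s ^ (γ - 1 / 2)) ^ 2 := by
  simp_rw [sq (s ^ (2 * γ) * _)]
  rw [hW.integral_field_mul γ hs hs]
  have h1 := rpow_mul_min_le (γ := γ) hs.1 hs.1
  have h2 : s ^ (2 * γ) ≤ s ^ (γ - 1 / 2) :=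
    Real.rpow_le_rpow_of_exponent_ge hs.1 hs.2 (by linarith)
  have hp : 0 < s := hs.1
  have h3 : s ^ (2 * γ) * s ^ (2 * γ) ≤ s ^ (γ - 1 / 2) * s ^ (γ - 1 / 2) := by gcongr
  have h4 : 0 ≤ s ^ γ * s ^ (2 * γ) := by positivity
  have h5 : 0 ≤ s ^ (γ - 1 / 2) * s ^ (γ - 1 / 2) := by positivity
  nlinarith

end IsStdBrownian

/-- `E[U₂] = 0` and `Var(U₂) = ((1+γ₀)/(1+2γ₀))²` for `γ₀ > -1/2`. -/
theorem stmt_4 {Ω : Type*} [MeasurableSpace Ω] (μ : Measure Ω) (W : ℝ → Ω → ℝ)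
    (hW : IsStdBrownian μ W) (γ₀ : ℝ) (hγ : -1/2 < γ₀) :
    (∫ ω, Ustat2 W γ₀ ω ∂μ) = 0 ∧
    variance (Ustat2 W γ₀) μ = ((1+γ₀) / (1+2*γ₀))^2 := by
  have := hW.1
  have hWm : Measurable (Function.uncurry W) :=
    measurable_uncurry_of_continuous_of_measurable hW.2.2.1 hW.2.2.2.1
  have hf : Measurable (Function.uncurry
      fun s ω => s ^ (2 * γ₀) * (s ^ (-γ₀ - 1) * W s ω - W 1 ω)) := by
    have h1 : Measurable fun z : ℝ × Ω => W 1 z.2 := (hW.2.2.2.1 1).comp measurable_snd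
    exact (measurable_fst.pow_const _).mul (((measurable_fst.pow_const _).mul hWm).sub h1)
  have hp : Integrable (fun s : ℝ => 2 * s ^ (γ₀ - 1 / 2))
      (volume.restrict (Set.Ioc (0 : ℝ) 1)) :=
    (integrableOn_rpow_Ioc (by linarith) 1 zero_le_one).const_mul 2
  have hb : ∀ᵐ s ∂(volume.restrict (Set.Ioc (0 : ℝ) 1)), 0 < 2 * s ^ (γ₀ - 1 / 2) ∧
      MemLp (fun ω => s ^ (2 * γ₀) * (s ^ (-γ₀ - 1) * W s ω - W 1 ω)) 2 μ ∧
      ∫ ω, (s ^ (2 * γ₀) * (s ^ (-γ₀ - 1) * W s ω - W 1 ω)) ^ 2 ∂μ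
        ≤ (2 * s ^ (γ₀ - 1 / 2)) ^ 2 := by
    filter_upwards [ae_restrict_mem measurableSet_Ioc] with s hs
    exact ⟨mul_pos two_pos (Real.rpow_pos_of_pos hs.1 _), hW.memLp_field γ₀ hs.1.le,
      hW.integral_field_sq_le hγ hs⟩
  have hmean : ∫ ω, Ustat2 W γ₀ ω ∂μ = 0 := by
    simp only [Ustat2]
    rw [integral_const_mul, integral_integral_of_sq_le hf hp hb]
    have h0 : ∀ s ∈ Set.Ioc (0 : ℝ) 1,
        ∫ ω, s ^ (2 * γ₀) * (s ^ (-γ₀ - 1) * W s ω - W 1 ω) ∂μ = 0 := fun s hs => by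
      rw [integral_const_mul, integral_sub
        (((hW.memLp hs.1.le).integrable one_le_two).const_mul _)
        ((hW.memLp zero_le_one).integrable one_le_two), integral_const_mul,
        hW.integral_eq_zero hs.1.le, hW.integral_eq_zero zero_le_one]
      ring
    rw [setIntegral_eq_zero_of_forall_eq_zero h0, mul_zero]
  refine ⟨hmean, ?_⟩
  have hUm : AEMeasurable (Ustat2 W γ₀) μ := by
    have h := (hf.comp measurable_swap).stronglyMeasurable.integral_prod_right'
      (ν := volume.restrict (Set.Ioc (0 : ℝ) 1))
    exact (h.measurable.const_mul (1 + γ₀)).aemeasurable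
  rw [variance_of_integral_eq_zero hUm hmean]
  simp only [Ustat2, mul_pow]
  rw [integral_const_mul, integral_sq_integral_of_sq_le hf hp hb]
  have hK := integral_kernel hγ
  rw [← integral_congr_ae (ae_prod_mem_Ioc.mono fun z hz =>
    hW.integral_field_mul γ₀ hz.1 hz.2)] at hK
  rw [hK, div_pow]
  ring
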